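/- arXiv:2208.09595 — 9 statements merged into one kernel-verified Lean document; each statement's English description precedes it below -/
import Mathlib

section
/- Let P be a Borel probability measure on ℝ^d that is symmetric around the origin (P(A) = P(−A) for every Borel set A), let s ∈ ℝ^d, λ ∈ [0,1], and γ ≥ 1. Let T_sP be the translate of P by s (T_sP(A) = P(A − s)) and set Q = (1−λ)P + λT_sP. Then the hockey-stick divergences satisfy E_γ(P‖Q) ≤ E_γ(Q‖P). -/
open MeasureTheory Real

/-- The hockey-stick divergence `E_γ(P‖Q) = sup_{A measurable} P(A) - γ Q(A)`. -/
noncomputable def hsDiv {α : Type*} [MeasurableSpace α] (γ : ℝ)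
    (P Q : Measure α) : ℝ :=
  ⨆ A : {A : Set α // MeasurableSet A}, ((P A.1).toReal - γ * (Q A.1).toReal)

/-!
If `P` is symmetric and `R` is its translate by `s`, the reflection `x ↦ -x + s` exchanges `P` and
`R`, hence carries the pair `((1 - lam) P + lam R, P)` to `((1 - lam) R + lam P, R)` without
changing its divergence. It remains to compare `E_γ(P‖(1 - lam) P + lam R)` with
`E_γ((1 - lam) R + lam P‖R)`, and this can be done one set `A` at a time: the right-hand term minus
the left-hand one is `(γ - 1) (1 - lam) (P A - R A)`, and where `P A < R A` the left-hand term is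
not positive, while `E_γ` is never negative.
-/

section HockeyStick

variable {α β : Type*} [MeasurableSpace α] [MeasurableSpace β] {γ c : ℝ} {P Q : Measure α}

theorem bddAbove_range_hsDiv [IsFiniteMeasure P] (hγ : 0 ≤ γ) :
    BddAbove (Set.range fun A : {A : Set α // MeasurableSet A} ↦ P.real A - γ * Q.real A) := by
  refine ⟨P.real Set.univ, ?_⟩
  rintro _ ⟨A, rfl⟩
  calc P.real A - γ * Q.real A
      ≤ P.real A := sub_le_self _ (mul_nonneg hγ measureReal_nonneg)
    _ ≤ P.real Set.univ := measureReal_mono (Set.subset_univ _)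

theorem le_hsDiv [IsFiniteMeasure P] (hγ : 0 ≤ γ) {A : Set α} (hA : MeasurableSet A) :
    P.real A - γ * Q.real A ≤ hsDiv γ P Q :=
  le_ciSup (bddAbove_range_hsDiv hγ) ⟨A, hA⟩

theorem hsDiv_le (h : ∀ A, MeasurableSet A → P.real A - γ * Q.real A ≤ c) : hsDiv γ P Q ≤ c :=
  have : Nonempty {A : Set α // MeasurableSet A} := ⟨⟨∅, .empty⟩⟩
  ciSup_le fun A ↦ h A A.2

theorem hsDiv_nonneg [IsFiniteMeasure P] (hγ : 0 ≤ γ) : 0 ≤ hsDiv γ P Q := by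
  simpa only [measureReal_empty, mul_zero, sub_zero] using
    le_hsDiv (P := P) (Q := Q) hγ MeasurableSet.empty

theorem hsDiv_map_le [IsFiniteMeasure P] (hγ : 0 ≤ γ) {f : α → β} (hf : Measurable f) :
    hsDiv γ (P.map f) (Q.map f) ≤ hsDiv γ P Q := by
  refine hsDiv_le fun A hA ↦ ?_
  rw [map_measureReal_apply hf hA, map_measureReal_apply hf hA]
  exact le_hsDiv hγ (hf hA)

end HockeyStick

section Mixture

variable {α β : Type*} [MeasurableSpace α] [MeasurableSpace β]

/-- The mixture `(1 - lam) P + lam R` of two measures. The weights are truncated at `0`, so this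
has its intended meaning only for `lam ∈ [0, 1]`. -/
noncomputable def mixture (lam : ℝ) (P R : Measure α) : Measure α :=
  ENNReal.ofReal (1 - lam) • P + ENNReal.ofReal lam • R

variable {lam γ : ℝ} {P R : Measure α}

instance [IsFiniteMeasure P] [IsFiniteMeasure R] : IsFiniteMeasure (mixture lam P R) := by
  have := P.smul_finite (ENNReal.ofReal_ne_top (r := 1 - lam))
  have := R.smul_finite (ENNReal.ofReal_ne_top (r := lam))
  unfold mixture
  infer_instance

theorem mixture_real_apply [IsFiniteMeasure P] [IsFiniteMeasure R] (hlam : lam ∈ Set.Icc (0 : ℝ) 1)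
    (A : Set α) : (mixture lam P R).real A = (1 - lam) * P.real A + lam * R.real A := by
  have := P.smul_finite (ENNReal.ofReal_ne_top (r := 1 - lam))
  have := R.smul_finite (ENNReal.ofReal_ne_top (r := lam))
  rw [mixture, measureReal_add_apply, measureReal_ennreal_smul_apply,
    measureReal_ennreal_smul_apply, ENNReal.toReal_ofReal (sub_nonneg.2 hlam.2),
    ENNReal.toReal_ofReal hlam.1]

theorem map_mixture {f : α → β} (hf : Measurable f) :
    (mixture lam P R).map f = mixture lam (P.map f) (R.map f) := by
  simp only [mixture, Measure.map_add _ _ hf, Measure.map_smul]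

theorem hsDiv_mixture_right_le_mixture_left [IsFiniteMeasure P] [IsFiniteMeasure R]
    (hlam : lam ∈ Set.Icc (0 : ℝ) 1) (hγ : 1 ≤ γ) :
    hsDiv γ P (mixture lam P R) ≤ hsDiv γ (mixture lam R P) R := by
  have hγ₀ : 0 ≤ γ := zero_le_one.trans hγ
  refine hsDiv_le fun A hA ↦ ?_
  rcases le_total (R.real A) (P.real A) with hRP | hPR
  · refine le_trans ?_ (le_hsDiv hγ₀ hA)
    have hdiff : 0 ≤ (γ - 1) * (1 - lam) * (P.real A - R.real A) :=
      mul_nonneg (mul_nonneg (sub_nonneg.2 hγ) (sub_nonneg.2 hlam.2)) (sub_nonneg.2 hRP)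
    rw [mixture_real_apply hlam, mixture_real_apply hlam]
    linarith
  · refine le_trans (sub_nonpos.2 ?_) (hsDiv_nonneg hγ₀)
    calc P.real A
        ≤ (mixture lam P R).real A := by
          rw [mixture_real_apply hlam]
          linarith [mul_le_mul_of_nonneg_left hPR hlam.1]
      _ ≤ γ * (mixture lam P R).real A := le_mul_of_one_le_left measureReal_nonneg hγ

theorem hsDiv_mixture_le_of_map_swap [IsFiniteMeasure P] {ρ : α → α} (hρ : Measurable ρ)
    (hPR : P.map ρ = R) (hRP : R.map ρ = P) (hlam : lam ∈ Set.Icc (0 : ℝ) 1) (hγ : 1 ≤ γ) :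
    hsDiv γ P (mixture lam P R) ≤ hsDiv γ (mixture lam P R) P := by
  have : IsFiniteMeasure R := hPR ▸ inferInstance
  calc hsDiv γ P (mixture lam P R)
      ≤ hsDiv γ (mixture lam R P) R := hsDiv_mixture_right_le_mixture_left hlam hγ
    _ = hsDiv γ ((mixture lam P R).map ρ) (P.map ρ) := by rw [map_mixture hρ, hPR, hRP]
    _ ≤ hsDiv γ (mixture lam P R) P := hsDiv_map_le (zero_le_one.trans hγ) hρ

end Mixture

section Reflection

theorem map_neg_add_eq_map_add_right {G : Type*} [AddGroup G] [MeasurableSpace G]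
    [MeasurableAdd G] [MeasurableNeg G] (P : Measure G) [P.IsNegInvariant] (s : G) :
    P.map (fun x ↦ -x + s) = P.map (· + s) := by
  conv_rhs => rw [← P.map_neg_eq_self, Measure.map_map (measurable_add_const s) measurable_neg]
  rfl

variable {G : Type*} [AddCommGroup G] [MeasurableSpace G] [MeasurableAdd G] [MeasurableNeg G]
  (P : Measure G) [P.IsNegInvariant] (s : G)

theorem map_neg_add_map_add_right : (P.map (· + s)).map (fun x ↦ -x + s) = P := by
  rw [Measure.map_map (measurable_neg.add_const s) (measurable_add_const s)]
  have hcomp : (fun x ↦ -x + s) ∘ (· + s) = (Neg.neg : G → G) := by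
    funext x
    simp only [Function.comp_apply, neg_add, neg_add_cancel_right]
  rw [hcomp, P.map_neg_eq_self]

theorem stmt0_general [IsFiniteMeasure P] {lam γ : ℝ} (hlam : lam ∈ Set.Icc (0 : ℝ) 1)
    (hγ : 1 ≤ γ) :
    hsDiv γ P (mixture lam P (P.map (· + s))) ≤ hsDiv γ (mixture lam P (P.map (· + s))) P :=
  hsDiv_mixture_le_of_map_swap (measurable_neg.add_const s) (map_neg_add_eq_map_add_right P s)
    (map_neg_add_map_add_right P s) hlam hγ

end Reflection

theorem stmt0 (d : ℕ) (P : Measure (EuclideanSpace ℝ (Fin d))) [IsProbabilityMeasure P]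
    (hsym : ∀ A : Set (EuclideanSpace ℝ (Fin d)), MeasurableSet A →
      P A = P ((fun x => -x) ⁻¹' A))
    (s : EuclideanSpace ℝ (Fin d)) (lam : ℝ) (hlam : lam ∈ Set.Icc (0 : ℝ) 1)
    (γ : ℝ) (hγ : 1 ≤ γ)
    (Q : Measure (EuclideanSpace ℝ (Fin d)))
    (hQ : Q = ENNReal.ofReal (1 - lam) • P + ENNReal.ofReal lam • P.map (· + s)) :
    hsDiv γ P Q ≤ hsDiv γ Q P := by
  have : P.IsNegInvariant :=
    ⟨Measure.ext fun A hA ↦ (Measure.map_apply measurable_neg hA).trans (hsym A hA).symm⟩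
  exact hQ ▸ stmt0_general P s hlam hγ
end

section
/- Let P be a Borel probability measure on ℝ^d that is symmetric around the origin (P(A) = P(−A) for every Borel set A), let s ∈ ℝ^d, and let T_sP be the translate of P by s (T_sP(A) = P(A − s)). Then for every γ ≥ 1, E_γ(P‖T_sP) = E_γ(T_sP‖P). -/
open MeasureTheory Real

/-!
If an involution `φ` swaps `P` and `Q`, then substituting `φ⁻¹(A)` for `A` in the supremum swaps
`E_γ(P‖Q)` and `E_γ(Q‖P)`. For symmetric `P`, the reflection `x ↦ s - x` swaps `P` and `T_s P`.
-/

section Invariance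

variable {α β : Type*} [MeasurableSpace α] [MeasurableSpace β]

theorem hsDiv_map_measurableEquiv (γ : ℝ) (P Q : Measure α) (e : α ≃ᵐ β) :
    hsDiv γ (P.map e) (Q.map e) = hsDiv γ P Q := by
  let preimage (A : {A : Set β // MeasurableSet A}) : {A : Set α // MeasurableSet A} :=
    ⟨e ⁻¹' A.1, e.measurable A.2⟩
  have preimage_surjective : Function.Surjective preimage := fun B =>
    ⟨⟨e.symm ⁻¹' B.1, e.symm.measurable B.2⟩, Subtype.ext (e.symm.symm_preimage_preimage B.1)⟩
  refine preimage_surjective.iSup_congr preimage fun A => ?_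
  rw [e.map_apply, e.map_apply]

theorem hsDiv_map_comm_of_involutive (γ : ℝ) (P : Measure α) {φ : α → α}
    (hφ : Function.Involutive φ) (hφm : Measurable φ) :
    hsDiv γ P (P.map φ) = hsDiv γ (P.map φ) P := by
  have map_map_self : (P.map φ).map φ = P := by
    rw [Measure.map_map hφm hφm, hφ.comp_self, Measure.map_id]
  calc hsDiv γ P (P.map φ) = hsDiv γ ((P.map φ).map φ) (P.map φ) := by rw [map_map_self]
    _ = hsDiv γ (P.map φ) P :=
      hsDiv_map_measurableEquiv γ (P.map φ) P (MeasurableEquiv.ofInvolutive φ hφ hφm)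

end Invariance

section Reflection

variable {G : Type*} [MeasurableSpace G]

theorem isNegInvariant_of_measure_preimage_neg [Neg G] [MeasurableNeg G] {P : Measure G}
    (h : ∀ A, MeasurableSet A → P A = P ((fun x => -x) ⁻¹' A)) : P.IsNegInvariant where
  neg_eq_self := Measure.ext fun A hA => (Measure.map_apply measurable_neg hA).trans (h A hA).symm

theorem map_sub_left_eq_map_add_left [AddGroup G] [MeasurableAdd G] [MeasurableNeg G]
    (P : Measure G) [P.IsNegInvariant] (s : G) : P.map (s - ·) = P.map (s + ·) :=
  calc P.map (s - ·) = (P.map Neg.neg).map (s + ·) := by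
        rw [Measure.map_map (measurable_const_add s) measurable_neg]
        simp only [Function.comp_def, sub_eq_add_neg]
    _ = P.map (s + ·) := by rw [Measure.map_neg_eq_self]

theorem stmt2_general [AddCommGroup G] [MeasurableAdd G] [MeasurableNeg G]
    (P : Measure G) [IsFiniteMeasure P] [P.IsNegInvariant] (s : G) (γ : ℝ) :
    hsDiv γ P (P.map (· + s)) = hsDiv γ (P.map (· + s)) P := by
  have map_reflection : P.map (s - ·) = P.map (· + s) := by
    simpa only [add_comm s] using map_sub_left_eq_map_add_left P s
  rw [← map_reflection]
  exact hsDiv_map_comm_of_involutive γ P (sub_sub_cancel s) (MeasurableEquiv.subLeft s).measurable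

end Reflection

theorem stmt2 (d : ℕ) (P : Measure (EuclideanSpace ℝ (Fin d))) [IsProbabilityMeasure P]
    (hsym : ∀ A : Set (EuclideanSpace ℝ (Fin d)), MeasurableSet A →
      P A = P ((fun x => -x) ⁻¹' A))
    (s : EuclideanSpace ℝ (Fin d)) (γ : ℝ) (hγ : 1 ≤ γ) :
    hsDiv γ P (P.map (· + s)) = hsDiv γ (P.map (· + s)) P := by
  have := isNegInvariant_of_measure_preimage_neg hsym
  exact stmt2_general P s γ
end

section
/- Let P and Q be mutually absolutely continuous probability measures on a measurable space, and let L = log(dP/dQ)(X) with X ∼ P (the privacy loss random variable). Then for every ε ≥ 0, the hockey-stick divergence satisfies E_{e^ε}(P‖Q) = E[(1 − e^{−(L−ε)})^+]. -/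
open MeasureTheory Real

/-! Writing `p = dP/dQ`, we have `P A - γ Q A = ∫ x in A, (p x - γ) ∂Q`, which is largest over
measurable `A` at `A = {p > γ}`, where it equals `∫ (p - γ)⁺ ∂Q`. For `γ = exp ε` we have
`(p - γ)⁺ = p (1 - exp (-(log p - ε)))⁺`, where both sides vanish at `p = 0` whatever the value
of `log 0`. Since `P` has density `p` with respect to `Q`, the supremum is the `P`-expectation of
`(1 - exp (-(log p - ε)))⁺`. -/

section PositivePart

variable {α : Type*} [MeasurableSpace α] {μ : Measure α} {f : α → ℝ}

theorem setIntegral_le_integral_max_zero (hf : Integrable f μ) (A : Set α) :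
    ∫ x in A, f x ∂μ ≤ ∫ x, max (f x) 0 ∂μ :=
  calc ∫ x in A, f x ∂μ
    _ ≤ ∫ x in A, max (f x) 0 ∂μ :=
      setIntegral_mono hf.integrableOn hf.pos_part.integrableOn fun _ ↦ le_max_left _ _
    _ ≤ ∫ x, max (f x) 0 ∂μ :=
      setIntegral_le_integral hf.pos_part (.of_forall fun _ ↦ le_max_right _ _)

theorem exists_measurableSet_setIntegral_eq_integral_max_zero (hf : AEMeasurable f μ) :
    ∃ A, MeasurableSet A ∧ ∫ x in A, f x ∂μ = ∫ x, max (f x) 0 ∂μ := by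
  have hpos : NullMeasurableSet {x | 0 < f x} μ := nullMeasurableSet_lt aemeasurable_const hf
  obtain ⟨A, -, hA, hA_ae⟩ := hpos.exists_measurable_superset_ae_eq
  refine ⟨A, hA, ?_⟩
  rw [setIntegral_congr_set hA_ae, ← integral_indicator₀ hpos]
  congr 1 with x
  by_cases hx : 0 < f x
  · simp [hx, hx.le]
  · simp [hx, not_lt.mp hx]

theorem iSup_setIntegral_eq_integral_max_zero (hf : Integrable f μ) :
    ⨆ A : {A : Set α // MeasurableSet A}, ∫ x in A.1, f x ∂μ = ∫ x, max (f x) 0 ∂μ := by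
  obtain ⟨A, hA, hA_eq⟩ := exists_measurableSet_setIntegral_eq_integral_max_zero hf.aemeasurable
  refine IsGreatest.csSup_eq ⟨⟨⟨A, hA⟩, hA_eq⟩, ?_⟩
  rintro _ ⟨B, rfl⟩
  exact setIntegral_le_integral_max_zero hf B

end PositivePart

section HockeyStick

variable {α : Type*} [MeasurableSpace α] {P Q : Measure α} [IsFiniteMeasure P] [IsFiniteMeasure Q]

theorem setIntegral_toReal_rnDeriv_sub_const (hPQ : P ≪ Q) (γ : ℝ) (A : Set α) :
    ∫ x in A, ((P.rnDeriv Q x).toReal - γ) ∂Q = (P A).toReal - γ * (Q A).toReal := by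
  rw [integral_sub Measure.integrable_toReal_rnDeriv.integrableOn (integrable_const γ),
    Measure.setIntegral_toReal_rnDeriv hPQ, setIntegral_const, smul_eq_mul, mul_comm γ]
  simp only [measureReal_def]

theorem hsDiv_eq_integral_max_toReal_rnDeriv_sub (hPQ : P ≪ Q) (γ : ℝ) :
    hsDiv γ P Q = ∫ x, max ((P.rnDeriv Q x).toReal - γ) 0 ∂Q := by
  simp only [hsDiv, ← setIntegral_toReal_rnDeriv_sub_const hPQ]
  exact iSup_setIntegral_eq_integral_max_zero
    (Measure.integrable_toReal_rnDeriv.sub (integrable_const γ))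

end HockeyStick

theorem mul_max_one_sub_exp_neg_log_sub {p : ℝ} (hp : 0 ≤ p) (ε : ℝ) :
    p * max (1 - exp (-(log p - ε))) 0 = max (p - exp ε) 0 := by
  obtain rfl | hp := hp.eq_or_lt
  · simp [exp_nonneg]
  · have h_exp : exp (-(log p - ε)) = exp ε / p := by rw [neg_sub, exp_sub, exp_log hp]
    rw [h_exp, mul_max_of_nonneg _ _ hp.le, mul_zero, mul_one_sub, mul_div_cancel₀ _ hp.ne']

theorem stmt4_general {α : Type*} [MeasurableSpace α] (P Q : Measure α)
    [IsFiniteMeasure P] [IsFiniteMeasure Q] (hPQ : P ≪ Q) (ε : ℝ) :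
    hsDiv (Real.exp ε) P Q =
      ∫ x, max (1 - Real.exp (-(Real.log ((P.rnDeriv Q x).toReal) - ε))) 0 ∂P := by
  rw [hsDiv_eq_integral_max_toReal_rnDeriv_sub hPQ, ← integral_rnDeriv_smul hPQ]
  simp only [smul_eq_mul, mul_max_one_sub_exp_neg_log_sub ENNReal.toReal_nonneg]

/-- For mutually absolutely continuous probability measures `P, Q`, the hockey-stick
divergence `E_{e^ε}(P‖Q)` equals `E[(1 - e^{-(L-ε)})⁺]`, where `L = log (dP/dQ)(X)`
is the privacy loss random variable with `X ∼ P`. -/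
theorem stmt4 {α : Type*} [MeasurableSpace α] (P Q : Measure α)
    [IsProbabilityMeasure P] [IsProbabilityMeasure Q]
    (hPQ : P ≪ Q) (hQP : Q ≪ P) (ε : ℝ) (hε : 0 ≤ ε) :
    hsDiv (Real.exp ε) P Q =
      ∫ x, max (1 - Real.exp (-(Real.log ((P.rnDeriv Q x).toReal) - ε))) 0 ∂P :=
  stmt4_general P Q hPQ ε
end

section
/- Let L be a real random variable, let t ≥ 0 satisfy M_L(t) = E[e^{tL}] < ∞, and let L̃ be the exponential tilting of L with parameter t. Then for every ε ≥ 0, δ_L(ε) = exp(K_L(t) − εt) · E[e^{−t(L̃−ε)}(1 − e^{−(L̃−ε)})^+], where K_L(t) = log M_L(t). -/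
open MeasureTheory Real

/-- The exponential tilting, with parameter `t`, of the law of a real random variable:
the measure with density `u ↦ e^{tu} / M` with respect to the law of `L`, where
`M = E[e^{tL}]` is the moment generating function evaluated at `t`. -/
noncomputable def tiltedLaw {Ω : Type*} [MeasurableSpace Ω] (μ : Measure Ω)
    (L : Ω → ℝ) (t : ℝ) : Measure ℝ :=
  (μ.map L).withDensity
    (fun u => ENNReal.ofReal (Real.exp (t * u) / ∫ ω, Real.exp (t * L ω) ∂μ))

section TiltedLaw

open ProbabilityTheory

variable {Ω E : Type*} [MeasurableSpace Ω] {μ : Measure Ω} {L : Ω → ℝ} {t : ℝ}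
  [NormedAddCommGroup E] [NormedSpace ℝ E] {g : ℝ → E}

theorem tiltedLaw_eq_tilted_map (hL : AEMeasurable L μ) (t : ℝ) :
    tiltedLaw μ L t = (μ.map L).tilted (t * ·) := by
  rw [tiltedLaw, Measure.tilted, integral_map hL (by fun_prop)]

theorem integral_tiltedLaw (hL : AEMeasurable L μ)
    (hM : Integrable (fun ω ↦ exp (t * L ω)) μ) (hg : AEStronglyMeasurable g (μ.map L)) :
    ∫ u, g u ∂tiltedLaw μ L t = ∫ ω, exp (t * L ω - cgf L μ t) • g (L ω) ∂μ := by
  have hM_map : Integrable (fun u ↦ exp (t * id u)) (μ.map L) :=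
    (integrable_map_measure (by fun_prop) hL).2 hM
  have hcgf : cgf id (μ.map L) t = cgf L μ t := by rw [cgf, cgf, mgf_id_map hL]
  calc ∫ u, g u ∂tiltedLaw μ L t
      = ∫ u, g u ∂(μ.map L).tilted (t * ·) := by rw [tiltedLaw_eq_tilted_map hL]
    _ = ∫ u, exp (t * u - cgf L μ t) • g u ∂μ.map L := by
        rw [← hcgf]
        exact integral_tilted_mul_eq_cgf g hM_map
    _ = ∫ ω, exp (t * L ω - cgf L μ t) • g (L ω) ∂μ :=
        integral_map hL (.smul (by fun_prop) hg)

theorem stmt5_general (hL : AEMeasurable L μ) (hM : Integrable (fun ω ↦ exp (t * L ω)) μ)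
    (ε : ℝ) (hg : AEStronglyMeasurable g (μ.map L)) :
    ∫ ω, g (L ω) ∂μ =
      exp (cgf L μ t - ε * t) • ∫ u, exp (-t * (u - ε)) • g u ∂tiltedLaw μ L t := by
  have exp_cancel (u : ℝ) :
      exp (cgf L μ t - ε * t) * (exp (t * u - cgf L μ t) * exp (-t * (u - ε))) = 1 := by
    rw [← exp_add, ← exp_add, exp_eq_one_iff]
    ring
  have hg_exp : AEStronglyMeasurable (fun u ↦ exp (-t * (u - ε)) • g u) (μ.map L) :=
    .smul (by fun_prop) hg
  rw [integral_tiltedLaw hL hM hg_exp, ← integral_smul]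
  simp only [smul_smul, exp_cancel, one_smul]

end TiltedLaw

/-- `δ_L(ε) = exp(K_L(t) - εt) · E[e^{-t(L̃-ε)} (1 - e^{-(L̃-ε)})⁺]`, where `L̃` is the
exponential tilting of `L` with parameter `t` and `K_L(t) = log E[e^{tL}]`. -/
theorem stmt5 {Ω : Type*} [MeasurableSpace Ω] (μ : Measure Ω) [IsProbabilityMeasure μ]
    (L : Ω → ℝ) (hL : Measurable L) (t : ℝ) (ht : 0 ≤ t)
    (hM : Integrable (fun ω => Real.exp (t * L ω)) μ) (ε : ℝ) (hε : 0 ≤ ε) :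
    (∫ ω, max (1 - Real.exp (-(L ω - ε))) 0 ∂μ) =
      Real.exp ((Real.log (∫ ω, Real.exp (t * L ω) ∂μ)) - ε * t) *
        ∫ u, Real.exp (-t * (u - ε)) * max (1 - Real.exp (-(u - ε))) 0
          ∂(tiltedLaw μ L t) :=
  stmt5_general (g := fun u ↦ max (1 - exp (-(u - ε))) 0) hL.aemeasurable hM ε (by fun_prop)
end

section
/- Let L be a real random variable and ε ≥ 0. For every t ≥ 0 with M_L(t) = E[e^{tL}] < ∞, it holds that δ_L(ε) ≤ exp(K_L(t) − εt); consequently δ_L(ε) ≤ inf_{t ≥ 0} exp(K_L(t) − εt) (the moments accountant bound). -/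
open MeasureTheory Real

/-! The hockey-stick integrand `(1 - exp (-(x - ε)))⁺` vanishes for `x ≤ ε` and is at most `1`, so
`δ_L(ε)` is at most the tail probability `μ {ε ≤ L}`, to which Chernoff's bound applies. -/

section PrivacyCurve

open ProbabilityTheory Set

variable {Ω : Type*} [MeasurableSpace Ω] {μ : Measure Ω} {L : Ω → ℝ}

/-- The privacy curve `δ_L(ε)` induced by a privacy loss variable `L`. As a Bochner integral it
takes the junk value `0` when the integrand is not integrable. -/
noncomputable def privacyCurve (L : Ω → ℝ) (μ : Measure Ω) (ε : ℝ) : ℝ :=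
  ∫ ω, max (1 - exp (-(L ω - ε))) 0 ∂μ

theorem max_one_sub_exp_neg_sub_le_indicator (x ε : ℝ) :
    max (1 - exp (-(x - ε))) 0 ≤ (Ici ε).indicator 1 x := by
  rcases lt_or_ge x ε with hlt | hge
  · have one_le_exp_neg : 1 ≤ exp (-(x - ε)) := one_le_exp (by linarith)
    simpa [hlt.not_ge] using one_le_exp_neg
  · simpa [hge] using (exp_pos (ε - x)).le

theorem privacyCurve_le_measureReal_ge [IsFiniteMeasure μ] (hL : AEMeasurable L μ) (ε : ℝ) :
    privacyCurve L μ ε ≤ μ.real {ω | ε ≤ L ω} := by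
  have tail_measurable : NullMeasurableSet {ω | ε ≤ L ω} μ :=
    hL.nullMeasurableSet_preimage measurableSet_Ici
  calc privacyCurve L μ ε
      ≤ ∫ ω, {ω | ε ≤ L ω}.indicator 1 ω ∂μ :=
        integral_mono_of_nonneg (.of_forall fun _ ↦ le_max_right _ _)
          ((integrable_const 1).indicator₀ tail_measurable)
          (.of_forall fun ω ↦ max_one_sub_exp_neg_sub_le_indicator (L ω) ε)
    _ = μ.real {ω | ε ≤ L ω} := by
        simp [integral_indicator₀ tail_measurable]

theorem privacyCurve_le_exp_cgf [IsFiniteMeasure μ] (hL : AEMeasurable L μ) (ε : ℝ) {t : ℝ}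
    (ht : 0 ≤ t) (h_int : Integrable (fun ω ↦ exp (t * L ω)) μ) :
    privacyCurve L μ ε ≤ exp (cgf L μ t - ε * t) :=
  calc privacyCurve L μ ε
      ≤ μ.real {ω | ε ≤ L ω} := privacyCurve_le_measureReal_ge hL ε
    _ ≤ exp (-t * ε + cgf L μ t) := measure_ge_le_exp_cgf ε ht h_int
    _ = exp (cgf L μ t - ε * t) := by ring_nf

theorem stmt6_general [IsFiniteMeasure μ] (hL : AEMeasurable L μ) (ε : ℝ) :
    (∀ t : ℝ, 0 ≤ t → Integrable (fun ω ↦ exp (t * L ω)) μ →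
      privacyCurve L μ ε ≤ exp (cgf L μ t - ε * t)) ∧
    privacyCurve L μ ε ≤
      ⨅ t : {t : ℝ // 0 ≤ t ∧ Integrable (fun ω ↦ exp (t * L ω)) μ},
        exp (cgf L μ t - ε * t) := by
  have : Nonempty {t : ℝ // 0 ≤ t ∧ Integrable (fun ω ↦ exp (t * L ω)) μ} :=
    ⟨0, le_rfl, by simp⟩
  exact ⟨fun _ ht h_int ↦ privacyCurve_le_exp_cgf hL ε ht h_int,
    le_ciInf fun t ↦ privacyCurve_le_exp_cgf hL ε t.2.1 t.2.2⟩

end PrivacyCurve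

/-- The moments accountant bound: for every `t ≥ 0` at which the MGF is finite,
`δ_L(ε) ≤ exp(K_L(t) - εt)`, and consequently `δ_L(ε) ≤ inf_{t ≥ 0} exp(K_L(t) - εt)`. -/
theorem stmt6 {Ω : Type*} [MeasurableSpace Ω] (μ : Measure Ω) [IsProbabilityMeasure μ]
    (L : Ω → ℝ) (hL : Measurable L) (ε : ℝ) (hε : 0 ≤ ε) :
    (∀ t : ℝ, 0 ≤ t → Integrable (fun ω => Real.exp (t * L ω)) μ →
      (∫ ω, max (1 - Real.exp (-(L ω - ε))) 0 ∂μ) ≤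
        Real.exp ((Real.log (∫ ω, Real.exp (t * L ω) ∂μ)) - ε * t)) ∧
    (∫ ω, max (1 - Real.exp (-(L ω - ε))) 0 ∂μ) ≤
      ⨅ t : {t : ℝ // 0 ≤ t ∧ Integrable (fun ω => Real.exp (t * L ω)) μ},
        Real.exp ((Real.log (∫ ω, Real.exp (t.1 * L ω) ∂μ)) - ε * t.1) :=
  stmt6_general hL.aemeasurable ε
end

section
/- For every t > 0 and every x ∈ ℝ, with f(x,t) = e^{−tx} − e^{−(t+1)x}, f_x(x,t) = −t e^{−tx} + (t+1) e^{−(t+1)x}, f_{xx}(x,t) = t² e^{−tx} − (t+1)² e^{−(t+1)x}, and x₀ = 3·log((t+1)/t), the function f̄(x,t) = e^{−xt}(1 − e^{−x})^+ satisfies the quadratic upper bound f̄(x,t) ≤ f(x₀,t) + f_x(x₀,t)·(x − x₀) + (1/2)·f_{xx}(x₀,t)·(x − x₀)². -/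
open Real

/-
Every derivative of `f x = e^{-αx} - e^{-βx}` with `0 < α < β` changes sign exactly once: the sign
of `(-1)^k f⁽ᵏ⁾` is that of `x - k log (β/α) / (β - α)`. So for even `n` the derivative `f⁽ⁿ⁾` is
maximal at the zero `x₀` of `f⁽ⁿ⁺¹⁾`, and the Lagrange form of the remainder shows that the `n`-th
Taylor polynomial at `x₀` dominates `f`. Where `f` is negative one has `x ≤ x₀`, and there every
Taylor term is nonnegative, so the polynomial dominates `f⁺` as well.
-/

open Set

section Taylor

variable {f : ℝ → ℝ} {n : ℕ} {x₀ x : ℝ}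

theorem taylorWithinEval_uIcc_eq_univ (hf : ContDiff ℝ n f) (hx : x₀ ≠ x) (y : ℝ) :
    taylorWithinEval f n (uIcc x₀ x) x₀ y = taylorWithinEval f n univ x₀ y := by
  simp only [taylor_within_apply, iteratedDerivWithin_univ]
  refine Finset.sum_congr rfl fun k hk ↦ ?_
  have hkn : k ≤ n := Finset.mem_range_succ_iff.1 hk
  rw [iteratedDerivWithin_eq_iteratedDeriv (uniqueDiffOn_uIcc hx)
    (hf.contDiffAt.of_le (mod_cast hkn)) left_mem_uIcc]

theorem le_taylorWithinEval_of_isMaxOn_iteratedDeriv (hf : ContDiff ℝ n f) (hn : Even n)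
    (hmax : IsMaxOn (iteratedDeriv n f) (uIcc x₀ x) x₀) :
    f x ≤ taylorWithinEval f n univ x₀ x := by
  rcases eq_or_ne x₀ x with rfl | hx
  · simp
  cases n with
  | zero => simpa using hmax right_mem_uIcc
  | succ m =>
    obtain ⟨ξ, hξ, h_lagrange⟩ :=
      taylor_mean_remainder_lagrange_iteratedDeriv hx (mod_cast hf.contDiffOn)
    rw [taylorWithinEval_uIcc_eq_univ (hf.of_le (mod_cast m.le_succ)) hx, sub_eq_iff_eq_add']
      at h_lagrange
    have hξ_le : iteratedDeriv (m + 1) f ξ ≤ iteratedDeriv (m + 1) f x₀ :=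
      hmax (uIoo_subset_uIcc_self hξ)
    have h_pow : 0 ≤ (x - x₀) ^ (m + 1) := hn.pow_nonneg _
    calc f x = taylorWithinEval f m univ x₀ x
          + iteratedDeriv (m + 1) f ξ * (x - x₀) ^ (m + 1) / (m + 1).factorial := h_lagrange
      _ ≤ taylorWithinEval f m univ x₀ x
          + iteratedDeriv (m + 1) f x₀ * (x - x₀) ^ (m + 1) / (m + 1).factorial := by gcongr
      _ = taylorWithinEval f (m + 1) univ x₀ x := by
        rw [taylorWithinEval_succ, iteratedDerivWithin_univ, Nat.factorial_succ, smul_eq_mul]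
        push_cast
        ring

theorem taylorWithinEval_nonneg_of_alternating
    (hf : ∀ k ≤ n, 0 ≤ (-1) ^ k * iteratedDeriv k f x₀) (hx : x ≤ x₀) :
    0 ≤ taylorWithinEval f n univ x₀ x := by
  simp only [taylor_within_apply, iteratedDerivWithin_univ, smul_eq_mul]
  refine Finset.sum_nonneg fun k hk ↦ ?_
  have h_sign : (x - x₀) ^ k * iteratedDeriv k f x₀
      = (x₀ - x) ^ k * ((-1) ^ k * iteratedDeriv k f x₀) := by
    rw [← mul_assoc, ← mul_pow, mul_neg_one, neg_sub]
  rw [mul_assoc, h_sign]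
  have := hf k (Finset.mem_range_succ_iff.1 hk)
  have := sub_nonneg.2 hx
  positivity

end Taylor

/-- The difference `e^{-αx} - e^{-βx}` of two exponential decays; `f(x,t)` is the case
`α = t`, `β = t + 1`. -/
noncomputable def expDiff (α β x : ℝ) : ℝ := exp (-α * x) - exp (-β * x)

/-- The point where the `k`-th derivative of `expDiff α β` vanishes, for `0 < α < β`. -/
noncomputable def expDiffRoot (α β : ℝ) (k : ℕ) : ℝ := k * log (β / α) / (β - α)

theorem exp_mul_max_one_sub_exp (t x : ℝ) :
    exp (-x * t) * max (1 - exp (-x)) 0 = max (expDiff t (t + 1) x) 0 := by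
  rw [mul_max_of_nonneg _ _ (exp_pos _).le, mul_zero, mul_one_sub, ← exp_add, expDiff]
  ring_nf

theorem contDiff_expDiff (α β : ℝ) {n : WithTop ℕ∞} : ContDiff ℝ n (expDiff α β) := by
  unfold expDiff
  fun_prop

theorem iteratedDeriv_expDiff (α β : ℝ) (k : ℕ) (x : ℝ) :
    iteratedDeriv k (expDiff α β) x = (-α) ^ k * exp (-α * x) - (-β) ^ k * exp (-β * x) := by
  unfold expDiff
  rw [iteratedDeriv_fun_sub (by fun_prop) (by fun_prop), iteratedDeriv_exp_const_mul,
    iteratedDeriv_exp_const_mul]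

theorem pow_mul_exp_neg_mul {c : ℝ} (hc : 0 < c) (k : ℕ) (x : ℝ) :
    c ^ k * exp (-c * x) = exp (k * log c - c * x) := by
  rw [sub_eq_add_neg, exp_add, exp_nat_mul, exp_log hc, neg_mul]

section Sign

variable {α β x : ℝ} {k n : ℕ}

theorem neg_one_pow_mul_iteratedDeriv_expDiff_nonneg_iff (hα : 0 < α) (hαβ : α < β) :
    0 ≤ (-1) ^ k * iteratedDeriv k (expDiff α β) x ↔ expDiffRoot α β k ≤ x := by
  have hβ : 0 < β := hα.trans hαβ
  have h_alternate : (-1) ^ k * iteratedDeriv k (expDiff α β) x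
      = exp (k * log α - α * x) - exp (k * log β - β * x) := by
    rw [iteratedDeriv_expDiff, mul_sub, ← mul_assoc, ← mul_assoc, ← mul_pow, ← mul_pow,
      neg_one_mul, neg_one_mul, neg_neg, neg_neg, pow_mul_exp_neg_mul hα, pow_mul_exp_neg_mul hβ]
  rw [h_alternate, sub_nonneg, exp_le_exp, expDiffRoot, div_le_iff₀ (sub_pos.2 hαβ),
    log_div hβ.ne' hα.ne']
  constructor <;> intro h <;> linarith

theorem expDiffRoot_mono (hα : 0 < α) (hαβ : α ≤ β) : Monotone (expDiffRoot α β) := by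
  intro k n hkn
  have h_log : 0 ≤ log (β / α) := log_nonneg ((one_le_div hα).2 hαβ)
  have : 0 ≤ β - α := sub_nonneg.2 hαβ
  unfold expDiffRoot
  gcongr

theorem expDiff_nonneg_of_expDiffRoot_le (hα : 0 < α) (hαβ : α < β) (hx : expDiffRoot α β k ≤ x) :
    0 ≤ expDiff α β x := by
  simpa using (neg_one_pow_mul_iteratedDeriv_expDiff_nonneg_iff (k := 0) hα hαβ).2
    ((expDiffRoot_mono hα hαβ.le k.zero_le).trans hx)

theorem isMaxOn_iteratedDeriv_expDiff (hα : 0 < α) (hαβ : α < β) (hn : Even n) :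
    IsMaxOn (iteratedDeriv n (expDiff α β)) univ (expDiffRoot α β (n + 1)) := by
  have h_diff : Differentiable ℝ (iteratedDeriv n (expDiff α β)) :=
    (contDiff_expDiff α β).differentiable_iteratedDeriv' n
  have h_sign (y : ℝ) :
      deriv (iteratedDeriv n (expDiff α β)) y ≤ 0 ↔ expDiffRoot α β (n + 1) ≤ y := by
    rw [← iteratedDeriv_succ, ← neg_one_pow_mul_iteratedDeriv_expDiff_nonneg_iff hα hαβ,
      hn.add_one.neg_one_pow, neg_one_mul, neg_nonneg]
  refine isMaxOn_univ_of_deriv h_diff.continuous.continuousAt h_diff.differentiableOn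
    h_diff.differentiableOn (fun y hy ↦ ?_) fun y hy ↦ (h_sign y).2 (le_of_lt hy)
  exact (lt_of_not_ge (mt (h_sign y).1 (not_le_of_gt hy))).le

end Sign

theorem stmt9_general {α β : ℝ} (hα : 0 < α) (hαβ : α < β) {n : ℕ} (hn : Even n) (x : ℝ) :
    max (expDiff α β x) 0 ≤
      taylorWithinEval (expDiff α β) n univ (expDiffRoot α β (n + 1)) x := by
  have h_le : expDiff α β x ≤
      taylorWithinEval (expDiff α β) n univ (expDiffRoot α β (n + 1)) x :=
    le_taylorWithinEval_of_isMaxOn_iteratedDeriv (contDiff_expDiff α β) hn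
      ((isMaxOn_iteratedDeriv_expDiff hα hαβ hn).on_subset (subset_univ _))
  refine max_le h_le ?_
  rcases le_total x (expDiffRoot α β (n + 1)) with hx | hx
  · exact taylorWithinEval_nonneg_of_alternating (fun k hk ↦
      (neg_one_pow_mul_iteratedDeriv_expDiff_nonneg_iff hα hαβ).2
        (expDiffRoot_mono hα hαβ.le (Nat.le_succ_of_le hk))) hx
  · exact (expDiff_nonneg_of_expDiffRoot_le hα hαβ hx).trans h_le

theorem taylorWithinEval_two_expDiff (α β x₀ x : ℝ) :
    taylorWithinEval (expDiff α β) 2 univ x₀ x =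
      (exp (-α * x₀) - exp (-β * x₀))
      + (-α * exp (-α * x₀) + β * exp (-β * x₀)) * (x - x₀)
      + (1 / 2) * (α ^ 2 * exp (-α * x₀) - β ^ 2 * exp (-β * x₀)) * (x - x₀) ^ 2 := by
  simp only [taylor_within_apply, iteratedDerivWithin_univ, iteratedDeriv_expDiff,
    Finset.sum_range_succ, Finset.sum_range_zero, Nat.factorial, smul_eq_mul]
  push_cast
  ring

theorem three_mul_log_eq_expDiffRoot (t : ℝ) :
    3 * log ((t + 1) / t) = expDiffRoot t (t + 1) 3 := by
  rw [expDiffRoot, add_sub_cancel_left, div_one, Nat.cast_ofNat]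

/-- Quadratic upper bound on `f̄(x,t) = e^{-xt}(1 - e^{-x})⁺` obtained from the series
expansion of `f(x,t) = e^{-tx} - e^{-(t+1)x}` around `x₀ = 3 log((t+1)/t)`. -/
theorem stmt9 (t : ℝ) (ht : 0 < t) (x : ℝ) :
    Real.exp (-x * t) * max (1 - Real.exp (-x)) 0 ≤
      (Real.exp (-t * (3 * Real.log ((t + 1) / t)))
        - Real.exp (-(t + 1) * (3 * Real.log ((t + 1) / t))))
      + (-t * Real.exp (-t * (3 * Real.log ((t + 1) / t)))
        + (t + 1) * Real.exp (-(t + 1) * (3 * Real.log ((t + 1) / t))))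
          * (x - 3 * Real.log ((t + 1) / t))
      + (1 / 2) * (t ^ 2 * Real.exp (-t * (3 * Real.log ((t + 1) / t)))
        - (t + 1) ^ 2 * Real.exp (-(t + 1) * (3 * Real.log ((t + 1) / t))))
          * (x - 3 * Real.log ((t + 1) / t)) ^ 2 := by
  rw [exp_mul_max_one_sub_exp, ← taylorWithinEval_two_expDiff, three_mul_log_eq_expDiffRoot]
  exact stmt9_general ht (lt_add_one t) even_two x
end

section
/- Let Z be a Gaussian random variable with mean μ ∈ ℝ and variance σ² > 0. Then for every t > 0 and every ε ∈ ℝ, E[e^{−t(Z−ε)}(1 − e^{−(Z−ε)})^+] ≤ 1/(√(2πσ²) · t · (t+1)). In particular, for a real random variable L with K_L finite at t, the SP-CLT approximation δ_{L,SP-CLT}(ε) = e^{K_L(t)−εt}·E[e^{−t(Z−ε)}(1 − e^{−(Z−ε)})^+], with Z Gaussian of mean K_L'(t) and variance K_L''(t) > 0, satisfies δ_{L,SP-CLT}(ε) ≤ e^{K_L(t)−εt}/(√(2π K_L''(t))·t·(t+1)). -/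
open MeasureTheory ProbabilityTheory Real

open Set
open scoped NNReal

/-! The Gaussian law `N(m, v)` has density at most `1 / √(2πv)`, so the expectation of a nonnegative
function is at most `1 / √(2πv)` times its Lebesgue integral. The integrand is a translate of
`e^{-tx}(1 - e^{-x})⁺`, which vanishes for `x ≤ 0` and whose Lebesgue integral is
`1/t - 1/(t+1) = 1/(t(t+1))`. -/

section GaussianDensityBound

variable (m : ℝ) (v : ℝ≥0)

lemma gaussianPDFReal_le_inv_sqrt (x : ℝ) :
    gaussianPDFReal m v x ≤ (√(2 * π * v))⁻¹ := by
  have h_exponent : -(x - m) ^ 2 / (2 * v) ≤ 0 :=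
    div_nonpos_of_nonpos_of_nonneg (neg_nonpos.2 (sq_nonneg _)) (by positivity)
  exact mul_le_of_le_one_right (by positivity) (exp_le_one_iff.2 h_exponent)

variable {v}

lemma gaussianReal_le_smul_volume (hv : v ≠ 0) :
    gaussianReal m v ≤ ENNReal.ofReal (√(2 * π * v))⁻¹ • volume := by
  rw [gaussianReal_of_var_ne_zero m hv, ← withDensity_const]
  exact withDensity_mono (.of_forall fun x ↦
    ENNReal.ofReal_le_ofReal (gaussianPDFReal_le_inv_sqrt m v x))

lemma integral_gaussianReal_le_of_nonneg (hv : v ≠ 0) {f : ℝ → ℝ}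
    (hf_nonneg : 0 ≤ᵐ[volume] f) (hf : Integrable f) :
    ∫ x, f x ∂(gaussianReal m v) ≤ (√(2 * π * v))⁻¹ * ∫ x, f x := by
  calc ∫ x, f x ∂(gaussianReal m v)
      ≤ ∫ x, f x ∂(ENNReal.ofReal (√(2 * π * v))⁻¹ • volume) :=
        integral_mono_measure (gaussianReal_le_smul_volume m hv)
          (Measure.ae_smul_measure hf_nonneg _) (hf.smul_measure ENNReal.ofReal_ne_top)
    _ = (√(2 * π * v))⁻¹ * ∫ x, f x := by
        rw [integral_smul_measure, ENNReal.toReal_ofReal (by positivity), smul_eq_mul]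

end GaussianDensityBound

section LaplaceIntegral

variable (a : ℝ) {b : ℝ}

lemma exp_mul_max_one_sub_exp_eq_indicator (hb : 0 ≤ b) :
    (fun x ↦ exp (-a * x) * max (1 - exp (-(b * x))) 0) =
      (Ioi 0).indicator fun x ↦ exp (-a * x) - exp (-(a + b) * x) := by
  funext x
  rcases lt_or_ge 0 x with hx | hx
  · have h_exp_le : exp (-(b * x)) ≤ 1 := exp_le_one_iff.2 (neg_nonpos.2 (by positivity))
    rw [indicator_of_mem (mem_Ioi.2 hx), max_eq_left (sub_nonneg.2 h_exp_le), mul_sub, mul_one,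
      ← exp_add]
    ring_nf
  · have h_le_exp : 1 ≤ exp (-(b * x)) :=
      one_le_exp (neg_nonneg.2 (mul_nonpos_of_nonneg_of_nonpos hb hx))
    rw [indicator_of_notMem (notMem_Ioi.2 hx), max_eq_right (sub_nonpos.2 h_le_exp), mul_zero]

variable {a}

lemma integrable_exp_mul_max_one_sub_exp (ha : 0 < a) (hb : 0 ≤ b) :
    Integrable fun x ↦ exp (-a * x) * max (1 - exp (-(b * x))) 0 := by
  rw [exp_mul_max_one_sub_exp_eq_indicator a hb, integrable_indicator_iff measurableSet_Ioi]
  exact (integrableOn_exp_mul_Ioi (by linarith) 0).sub (integrableOn_exp_mul_Ioi (by linarith) 0)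

lemma integral_exp_mul_max_one_sub_exp (ha : 0 < a) (hb : 0 ≤ b) :
    ∫ x, exp (-a * x) * max (1 - exp (-(b * x))) 0 = b / (a * (a + b)) := by
  have h_laplace {c : ℝ} (hc : 0 < c) : ∫ x in Ioi 0, exp (-c * x) = 1 / c := by
    rw [integral_exp_mul_Ioi (neg_lt_zero.2 hc), mul_zero, exp_zero, neg_div_neg_eq]
  have hab : 0 < a + b := by positivity
  calc ∫ x, exp (-a * x) * max (1 - exp (-(b * x))) 0
      = ∫ x in Ioi 0, (exp (-a * x) - exp (-(a + b) * x)) := by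
        rw [exp_mul_max_one_sub_exp_eq_indicator a hb, integral_indicator measurableSet_Ioi]
    _ = 1 / a - 1 / (a + b) := by
        rw [integral_sub (integrableOn_exp_mul_Ioi (neg_lt_zero.2 ha) 0)
          (integrableOn_exp_mul_Ioi (neg_lt_zero.2 hab) 0), h_laplace ha, h_laplace hab]
    _ = b / (a * (a + b)) := by
        field_simp
        ring

end LaplaceIntegral

lemma integral_gaussianReal_exp_mul_max_one_sub_exp_le {a b : ℝ} (ha : 0 < a) (hb : 0 ≤ b)
    (c m : ℝ) {v : ℝ≥0} (hv : v ≠ 0) :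
    ∫ z, exp (-a * (z - c)) * max (1 - exp (-(b * (z - c)))) 0 ∂(gaussianReal m v) ≤
      b / (√(2 * π * v) * a * (a + b)) := by
  let f : ℝ → ℝ := fun x ↦ exp (-a * x) * max (1 - exp (-(b * x))) 0
  have hf_nonneg : 0 ≤ f := fun x ↦ by positivity
  have hf : Integrable f := integrable_exp_mul_max_one_sub_exp ha hb
  calc ∫ z, f (z - c) ∂(gaussianReal m v)
      ≤ (√(2 * π * v))⁻¹ * ∫ z, f (z - c) :=
        integral_gaussianReal_le_of_nonneg m hv (.of_forall fun z ↦ hf_nonneg (z - c))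
          (hf.comp_sub_right c)
    _ = (√(2 * π * v))⁻¹ * (b / (a * (a + b))) := by
        rw [integral_sub_right_eq_self f, integral_exp_mul_max_one_sub_exp ha hb]
    _ = b / (√(2 * π * v) * a * (a + b)) := by
        rw [inv_mul_eq_div, div_div, mul_comm (a * (a + b)),
          mul_assoc (√(2 * π * v))]

/-- For `Z` Gaussian with mean `m` and variance `v > 0` and any `t > 0`,
`E[e^{-t(Z-ε)}(1-e^{-(Z-ε)})⁺] ≤ 1/(√(2πv) t (t+1))`; consequently the SP-CLT
approximation (with `Z` of mean `K_L'(t)` and variance `K_L''(t) > 0`) satisfies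
`δ_{L,SP-CLT}(ε) ≤ e^{K_L(t)-εt}/(√(2π K_L''(t)) t (t+1))`. -/
theorem stmt12 {Ω : Type*} [MeasurableSpace Ω] (μ : Measure Ω) [IsProbabilityMeasure μ]
    (L : Ω → ℝ) (hL : Measurable L)
    (K : ℝ → ℝ) (hK : K = fun t => Real.log (∫ ω, Real.exp (t * L ω) ∂μ))
    (t : ℝ) (ht : 0 < t)
    (hM : Integrable (fun ω => Real.exp (t * L ω)) μ)
    (hvar : 0 < deriv (deriv K) t) (ε : ℝ) :
    (∀ m v : ℝ, 0 < v →
      (∫ z, Real.exp (-t * (z - ε)) * max (1 - Real.exp (-(z - ε))) 0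
          ∂(gaussianReal m v.toNNReal)) ≤
        1 / (Real.sqrt (2 * π * v) * t * (t + 1))) ∧
    Real.exp (K t - ε * t) *
        (∫ z, Real.exp (-t * (z - ε)) * max (1 - Real.exp (-(z - ε))) 0
          ∂(gaussianReal (deriv K t) (deriv (deriv K) t).toNNReal)) ≤
      Real.exp (K t - ε * t) /
        (Real.sqrt (2 * π * deriv (deriv K) t) * t * (t + 1)) := by
  have h_gaussian (m v : ℝ) (hv : 0 < v) :
      ∫ z, exp (-t * (z - ε)) * max (1 - exp (-(z - ε))) 0 ∂(gaussianReal m v.toNNReal) ≤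
        1 / (√(2 * π * v) * t * (t + 1)) := by
    simpa only [one_mul, coe_toNNReal v hv.le] using
      integral_gaussianReal_exp_mul_max_one_sub_exp_le ht zero_le_one ε m (toNNReal_pos.2 hv).ne'
  refine ⟨h_gaussian, ?_⟩
  rw [div_eq_mul_one_div]
  exact mul_le_mul_of_nonneg_left (h_gaussian _ _ hvar) (exp_nonneg _)
end

section
/- Let Z be a Gaussian random variable with mean m ∈ ℝ and variance v > 0, let t > 0 and ε ∈ ℝ, and set γ = (m − ε)/√v, α = √v·t − γ, and β = √v·(t+1) − γ. Then E[e^{−t(Z−ε)}(1 − e^{−(Z−ε)})^+] = e^{−γ²/2} · (q(α) − q(β))/√(2π), where q(z) = Q(z)·√(2π)·e^{z²/2} and Q(z) = 1 − Φ(z) with Φ the standard normal CDF. Consequently, for a random variable L with K_L finite at t, the SP-CLT approximation δ_{L,SP-CLT}(ε) = e^{K_L(t)−εt}·E[e^{−t(Z−ε)}(1 − e^{−(Z−ε)})^+] with m = K_L'(t), v = K_L''(t) equals exp(K_L(t) − εt − γ²/2)·(q(α) − q(β))/√(2π). -/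
open MeasureTheory ProbabilityTheory Real

/-- The standard normal CDF `Φ`. -/
noncomputable def stdNormalCDF (z : ℝ) : ℝ := (gaussianReal 0 1 (Set.Iic z)).toReal

/-- `q(z) = Q(z)·√(2π)·e^{z²/2}` where `Q(z) = 1 - Φ(z)`. -/
noncomputable def qFun (z : ℝ) : ℝ :=
  (1 - stdNormalCDF z) * Real.sqrt (2 * π) * Real.exp (z ^ 2 / 2)

/-!
On `(ε, ∞)` the integrand is `e^{-t(z-ε)} - e^{-(t+1)(z-ε)}`, and elsewhere it vanishes. Tilting
`N(m, v)` by `e^{-sz}` gives `N(m - vs, v)` up to the moment generating function, so the integral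
of `e^{-s(z-ε)}` over `(ε, ∞)` is an exponential times a Gaussian tail `Q(√v s - γ)`; completing
the square turns the exponential into `e^{-γ²/2} e^{(√v s - γ)²/2}`.
-/

open scoped NNReal

lemma setIntegral_exp_eq_mul_tilted {α : Type*} [MeasurableSpace α] {μ : Measure α}
    {f : α → ℝ} (hf : Integrable (fun x ↦ exp (f x)) μ)
    {s : Set α} (hs : MeasurableSet s) :
    ∫ x in s, exp (f x) ∂μ = (∫ x, exp (f x) ∂μ) * (μ.tilted f).real s := by
  rcases eq_zero_or_neZero μ with rfl | _
  · simp
  rw [measureReal_def, tilted_apply_eq_ofReal_integral' f hs, integral_div,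
    ENNReal.toReal_ofReal (by positivity), mul_div_cancel₀ _ (integral_exp_pos hf).ne']

lemma ext_of_mgf_id_eq {μ ν : Measure ℝ} [IsProbabilityMeasure μ] [IsFiniteMeasure ν]
    (hμ : 0 ∈ interior (integrableExpSet id μ)) (h : mgf id μ = mgf id ν) : μ = ν := by
  refine Measure.ext_of_charFun (funext fun u ↦ ?_)
  rw [← complexMGF_id_mul_I, ← complexMGF_id_mul_I]
  exact eqOn_complexMGF_of_mgf h (by simpa using hμ)

lemma integral_exp_mul_gaussianReal (m : ℝ) (v : ℝ≥0) (s : ℝ) :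
    ∫ x, exp (s * x) ∂(gaussianReal m v) = exp (m * s + v * s ^ 2 / 2) :=
  mgf_gaussianReal (by simp) s

lemma tilted_const_mul_gaussianReal (m : ℝ) (v : ℝ≥0) (s : ℝ) :
    (gaussianReal m v).tilted (s * ·) = gaussianReal (m + v * s) v := by
  have : IsProbabilityMeasure ((gaussianReal m v).tilted (s * ·)) :=
    isProbabilityMeasure_tilted (integrable_exp_mul_gaussianReal s)
  refine (ext_of_mgf_id_eq (by simp) (funext fun u ↦ ?_)).symm
  simp only [mgf, id_eq, integral_exp_tilted, Pi.add_apply, ← add_mul,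
    integral_exp_mul_gaussianReal, ← exp_sub]
  ring_nf

lemma gaussianReal_real_Ioi (m ε : ℝ) {v : ℝ≥0} (hv : v ≠ 0) :
    (gaussianReal m v).real (Set.Ioi ε) = (gaussianReal 0 1).real (Set.Ioi ((ε - m) / √v)) := by
  have sqrt_pos : 0 < √(v : ℝ) := by positivity
  have standardize : (gaussianReal m v).map (fun x ↦ (x - m) / √v) = gaussianReal 0 1 := by
    have : (fun x ↦ (x - m) / √v) = (· / √v) ∘ (· - m) := rfl
    rw [this, ← Measure.map_map (by fun_prop) (by fun_prop), gaussianReal_map_sub_const,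
      gaussianReal_map_div_const]
    congr 1
    · simp
    · ext
      simp [hv]
  rw [← standardize, map_measureReal_apply (by fun_prop) measurableSet_Ioi]
  congr 1
  ext x
  simp [div_lt_div_iff_of_pos_right sqrt_pos]

lemma qFun_div_sqrt_two_pi (z : ℝ) :
    qFun z / √(2 * π) = exp (z ^ 2 / 2) * (gaussianReal 0 1).real (Set.Ioi z) := by
  have tail : (gaussianReal 0 1).real (Set.Ioi z) = 1 - stdNormalCDF z := by
    rw [← Set.compl_Iic, probReal_compl_eq_one_sub measurableSet_Iic]
    rfl
  rw [qFun, tail]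
  field_simp

lemma integrable_exp_mul_sub_gaussianReal (m ε s : ℝ) (v : ℝ≥0) :
    Integrable (fun z ↦ exp (s * (z - ε))) (gaussianReal m v) := by
  simp only [mul_sub, exp_sub]
  exact (integrable_exp_mul_gaussianReal s).div_const _

lemma setIntegral_Ioi_exp_gaussianReal (m ε s : ℝ) {v : ℝ≥0} (hv : v ≠ 0) :
    ∫ z in Set.Ioi ε, exp (-s * (z - ε)) ∂(gaussianReal m v) =
      exp (-((m - ε) / √v) ^ 2 / 2) * (qFun (√v * s - (m - ε) / √v) / √(2 * π)) := by
  have sq_sqrt_v : √(v : ℝ) ^ 2 = v := sq_sqrt v.coe_nonneg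
  have threshold : (ε - (m + v * -s)) / √v = √v * s - (m - ε) / √v := by
    field_simp
    rw [sq_sqrt_v]
    ring
  have complete_square : s * ε + (m * -s + v * (-s) ^ 2 / 2) =
      -((m - ε) / √v) ^ 2 / 2 + (√v * s - (m - ε) / √v) ^ 2 / 2 := by
    have cancel : √v * ((m - ε) / √v) = m - ε := by field_simp
    linear_combination (-s ^ 2 / 2) * sq_sqrt_v + s * cancel
  calc ∫ z in Set.Ioi ε, exp (-s * (z - ε)) ∂(gaussianReal m v)
      = exp (s * ε) * ∫ z in Set.Ioi ε, exp (-s * z) ∂(gaussianReal m v) := by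
        rw [← integral_const_mul]
        congr with z
        rw [← exp_add]
        ring_nf
    _ = exp (s * ε) * (exp (m * -s + v * (-s) ^ 2 / 2) *
          (gaussianReal (m + v * -s) v).real (Set.Ioi ε)) := by
        rw [setIntegral_exp_eq_mul_tilted (integrable_exp_mul_gaussianReal (-s)) measurableSet_Ioi,
          tilted_const_mul_gaussianReal, integral_exp_mul_gaussianReal]
    _ = exp (-((m - ε) / √v) ^ 2 / 2) * (exp ((√v * s - (m - ε) / √v) ^ 2 / 2) *
          (gaussianReal 0 1).real (Set.Ioi (√v * s - (m - ε) / √v))) := by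
        rw [gaussianReal_real_Ioi _ _ hv, threshold, ← mul_assoc, ← mul_assoc, ← exp_add,
          ← exp_add, complete_square]
    _ = _ := by rw [qFun_div_sqrt_two_pi]

lemma exp_mul_max_one_sub_exp_eq_indicator_s14 (t ε z : ℝ) :
    exp (-t * (z - ε)) * max (1 - exp (-(z - ε))) 0 =
      (Set.Ioi ε).indicator (fun z ↦ exp (-t * (z - ε)) - exp (-(t + 1) * (z - ε))) z := by
  rcases lt_or_ge ε z with hz | hz
  · have factor_nonneg : 0 ≤ 1 - exp (-(z - ε)) := by
      rw [sub_nonneg, exp_le_one_iff]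
      linarith
    rw [Set.indicator_of_mem (Set.mem_Ioi.mpr hz), max_eq_left factor_nonneg, mul_sub, mul_one,
      ← exp_add]
    ring_nf
  · have factor_nonpos : 1 - exp (-(z - ε)) ≤ 0 := by
      rw [sub_nonpos, one_le_exp_iff]
      linarith
    rw [Set.indicator_of_notMem (Set.notMem_Ioi.mpr hz), max_eq_right factor_nonpos, mul_zero]

theorem stmt14_general (c t ε m : ℝ) {v : ℝ} (hv : 0 < v) :
    exp c * (∫ z, exp (-t * (z - ε)) * max (1 - exp (-(z - ε))) 0
        ∂(gaussianReal m v.toNNReal)) =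
      exp (c - ((m - ε) / √v) ^ 2 / 2) *
        ((qFun (√v * t - (m - ε) / √v) - qFun (√v * (t + 1) - (m - ε) / √v)) / √(2 * π)) := by
  lift v to ℝ≥0 using hv.le
  have hv' : v ≠ 0 := NNReal.coe_ne_zero.mp hv.ne'
  have integrableOn (s : ℝ) :
      IntegrableOn (fun z ↦ exp (-s * (z - ε))) (Set.Ioi ε) (gaussianReal m v) :=
    (integrable_exp_mul_sub_gaussianReal m ε (-s) v).integrableOn
  simp only [Real.toNNReal_coe, exp_mul_max_one_sub_exp_eq_indicator_s14]
  rw [integral_indicator measurableSet_Ioi, integral_sub (integrableOn t) (integrableOn (t + 1)),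
    setIntegral_Ioi_exp_gaussianReal m ε t hv', setIntegral_Ioi_exp_gaussianReal m ε (t + 1) hv',
    ← mul_sub, ← sub_div, ← mul_assoc, ← exp_add, neg_div, sub_eq_add_neg c]

/-- Closed form of the Gaussian expectation in the SP-CLT approximation:
`E[e^{-t(Z-ε)}(1-e^{-(Z-ε)})⁺] = e^{-γ²/2}(q(α)-q(β))/√(2π)` for `Z ∼ N(m, v)`,
where `γ = (m-ε)/√v`, `α = √v t - γ`, `β = √v (t+1) - γ`; consequently
`δ_{L,SP-CLT}(ε) = exp(K_L(t) - εt - γ²/2)(q(α)-q(β))/√(2π)`. -/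
theorem stmt14 {Ω : Type*} [MeasurableSpace Ω] (μ : Measure Ω) [IsProbabilityMeasure μ]
    (L : Ω → ℝ) (hL : Measurable L)
    (K : ℝ → ℝ) (hK : K = fun t => Real.log (∫ ω, Real.exp (t * L ω) ∂μ))
    (t : ℝ) (ht : 0 < t)
    (hM : Integrable (fun ω => Real.exp (t * L ω)) μ)
    (hvar : 0 < deriv (deriv K) t) (ε : ℝ) :
    (∀ m v : ℝ, 0 < v →
      (∫ z, Real.exp (-t * (z - ε)) * max (1 - Real.exp (-(z - ε))) 0
          ∂(gaussianReal m v.toNNReal)) =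
        Real.exp (-((m - ε) / Real.sqrt v) ^ 2 / 2) *
          ((qFun (Real.sqrt v * t - (m - ε) / Real.sqrt v)
            - qFun (Real.sqrt v * (t + 1) - (m - ε) / Real.sqrt v)) / Real.sqrt (2 * π))) ∧
    Real.exp (K t - ε * t) *
        (∫ z, Real.exp (-t * (z - ε)) * max (1 - Real.exp (-(z - ε))) 0
          ∂(gaussianReal (deriv K t) (deriv (deriv K) t).toNNReal)) =
      Real.exp (K t - ε * t
          - ((deriv K t - ε) / Real.sqrt (deriv (deriv K) t)) ^ 2 / 2) *
        ((qFun (Real.sqrt (deriv (deriv K) t) * t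
              - (deriv K t - ε) / Real.sqrt (deriv (deriv K) t))
          - qFun (Real.sqrt (deriv (deriv K) t) * (t + 1)
              - (deriv K t - ε) / Real.sqrt (deriv (deriv K) t))) / Real.sqrt (2 * π)) := by
  exact ⟨fun m v hv ↦ by simpa [neg_div] using stmt14_general 0 t ε m hv,
    stmt14_general (K t - ε * t) t ε (deriv K t) hvar⟩
end

section
/- Let L be a real random variable such that M_L(z) = E[e^{zL}] is finite for all real z in an open interval containing a point t > 0 (so M_L(t+is) = E[e^{(t+is)L}] is well defined for all s ∈ ℝ, with |M_L(t+is)| ≤ M_L(t)). Then for every ε ≥ 0, δ_L(ε) = (1/(2π)) ∫_{−∞}^{∞} e^{−(t+is)ε} · M_L(t+is) / ((t+is)·(t+is+1)) ds, where the integral is an absolutely convergent integral of a complex-valued function whose value is the real number δ_L(ε). -/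
open MeasureTheory Real Complex

/-!
With `x = L - ε`, `(1 - e^{-x})^+` is the function `φ(u) = (1 - u)^+` evaluated at
`u = e^{-x}`. The Mellin transform of `φ` is `1 / (z (z + 1))`, which is integrable on the vertical
line `Re z = t`, so Mellin inversion writes `φ(e^{-x})` as an integral of
`e^{(t+is)x} / ((t+is)(t+is+1))` over `s`. Taking the expectation under this integral (Fubini, with
domination by `e^{tx} / |(t+is)(t+is+1)|`) turns `e^{(t+is)x}` into the moment generating function
of `L - ε`, which is `e^{-(t+is)ε} M_L(t+is)`.
-/

theorem sigmaFinite_of_integrable_of_ae_ne_zero {Ω E : Type*} [MeasurableSpace Ω]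
    [NormedAddCommGroup E] {μ : Measure Ω} {f : Ω → E} (hf : Integrable f μ)
    (hf0 : ∀ᵐ ω ∂μ, f ω ≠ 0) : SigmaFinite μ := by
  obtain ⟨s, hs, hfs, hσ⟩ := hf.aefinStronglyMeasurable.exists_set_sigmaFinite
  have hs_univ : s =ᵐ[μ] Set.univ := by
    rw [Filter.EventuallyEq, ae_restrict_iff' hs.compl] at hfs
    rw [Filter.eventuallyEq_univ]
    filter_upwards [hfs, hf0] with ω hω hω0
    exact by_contra fun hωs => hω0 (hω hωs)
  rwa [Measure.restrict_congr_set hs_univ, Measure.restrict_univ] at hσ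

section MellinInversion

open ProbabilityTheory

variable {Ω E : Type*} [MeasurableSpace Ω] [NormedAddCommGroup E] [NormedSpace ℂ E]

theorem mellinInv_exp_neg (σ : ℝ) (F : ℂ → E) (x : ℝ) :
    mellinInv σ F (Real.exp (-x)) =
      (1 / (2 * π)) • ∫ s : ℝ, cexp ((σ + s * I) * x) • F (σ + s * I) := by
  have hcpow (z : ℂ) : ((Real.exp (-x) : ℝ) : ℂ) ^ (-z) = cexp (z * x) := by
    rw [cpow_def_of_ne_zero (by exact_mod_cast (Real.exp_pos _).ne'),
      ← ofReal_log (Real.exp_pos _).le, Real.log_exp]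
    congr 1
    push_cast
    ring
  simp only [mellinInv, hcpow]

theorem complexMGF_sub_const (X : Ω → ℝ) (μ : Measure Ω) (c : ℝ) (z : ℂ) :
    complexMGF (fun ω => X ω - c) μ z = cexp (-z * c) * complexMGF X μ z := by
  simp only [complexMGF, ← integral_const_mul, ← Complex.exp_add]
  congr! 3
  push_cast
  ring

variable {μ : Measure Ω} {X : Ω → ℝ} {σ : ℝ} {F : ℂ → E}

theorem integrable_prod_cexp_mul_smul (hX : AEMeasurable X μ)
    (hexp : Integrable (fun ω => Real.exp (σ * X ω)) μ) (hF : VerticalIntegrable F σ) :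
    Integrable (fun p : ℝ × Ω => cexp ((σ + p.1 * I) * X p.2) • F (σ + p.1 * I))
      ((volume : Measure ℝ).prod μ) := by
  have hcexp : AEMeasurable (fun p : ℝ × Ω => cexp ((σ + p.1 * I) * X p.2))
      ((volume : Measure ℝ).prod μ) :=
    Complex.measurable_exp.comp_aemeasurable <|
      AEMeasurable.mul (by fun_prop) (Complex.measurable_ofReal.comp_aemeasurable hX.comp_snd)
  refine (hF.norm.mul_prod hexp).mono' (hcexp.aestronglyMeasurable.smul hF.1.comp_fst)
    (.of_forall fun p => ?_)
  simp [norm_smul, Complex.norm_exp, mul_comm]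

variable [SFinite μ] [CompleteSpace E]

theorem verticalIntegrable_complexMGF_smul (hX : AEMeasurable X μ)
    (hexp : Integrable (fun ω => Real.exp (σ * X ω)) μ) (hF : VerticalIntegrable F σ) :
    VerticalIntegrable (fun z => complexMGF X μ z • F z) σ := by
  simpa only [VerticalIntegrable, complexMGF, integral_smul_const] using
    (integrable_prod_cexp_mul_smul hX hexp hF).integral_prod_left

theorem integral_mellinInv_exp_neg (hX : AEMeasurable X μ)
    (hexp : Integrable (fun ω => Real.exp (σ * X ω)) μ) (hF : VerticalIntegrable F σ) :
    ∫ ω, mellinInv σ F (Real.exp (-X ω)) ∂μ =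
      (1 / (2 * π)) • ∫ s : ℝ, complexMGF X μ (σ + s * I) • F (σ + s * I) := by
  simp only [mellinInv_exp_neg, complexMGF, ← integral_smul_const]
  rw [integral_smul]
  congr 1
  exact (integral_integral_swap (integrable_prod_cexp_mul_smul hX hexp hF)).symm

theorem integral_comp_exp_neg_eq_integral_complexMGF_smul_mellin {f : ℝ → E}
    (hX : AEMeasurable X μ) (hexp : Integrable (fun ω => Real.exp (σ * X ω)) μ)
    (hf : ContinuousOn f (Set.Ioi 0)) (hfσ : MellinConvergent f σ)
    (hfv : VerticalIntegrable (mellin f) σ) :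
    ∫ ω, f (Real.exp (-X ω)) ∂μ =
      (1 / (2 * π)) • ∫ s : ℝ, complexMGF X μ (σ + s * I) • mellin f (σ + s * I) := by
  rw [← integral_mellinInv_exp_neg hX hexp hfv]
  congr! 2 with ω
  exact (mellinInv_mellin_eq σ f (Real.exp_pos _) hfσ hfv
    (hf.continuousAt (Ioi_mem_nhds (Real.exp_pos _)))).symm

end MellinInversion

theorem hasMellin_max_one_sub {z : ℂ} (hz : 0 < z.re) :
    HasMellin (fun u : ℝ => ((max (1 - u) 0 : ℝ) : ℂ)) z (1 / (z * (z + 1))) := by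
  have hz1 : 0 < z.re + (1 : ℂ).re := add_pos hz (by simp)
  have hz_ne : z ≠ 0 := ne_zero_of_re_pos hz
  have hz1_ne : z + 1 ≠ 0 := ne_zero_of_re_pos (by simpa using hz1)
  have hdiff := hasMellin_sub (hasMellin_one_Ioc hz).1 (hasMellin_cpow_Ioc 1 hz1).1
  rw [(hasMellin_one_Ioc hz).2, (hasMellin_cpow_Ioc 1 hz1).2,
    show 1 / z - 1 / (z + 1) = 1 / (z * (z + 1)) by field_simp; ring] at hdiff
  have hmax : Set.EqOn
      (fun u : ℝ => (Set.Ioc 0 1).indicator (fun _ => (1 : ℂ)) u -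
        (Set.Ioc 0 1).indicator (fun v : ℝ => (v : ℂ) ^ (1 : ℂ)) u)
      (fun u : ℝ => ((max (1 - u) 0 : ℝ) : ℂ)) (Set.Ioi 0) := by
    intro u hu
    rw [Set.mem_Ioi] at hu
    rcases le_or_gt u 1 with hu1 | hu1
    · simp [hu, hu1]
    · simp [hu1.not_ge, hu1.le]
  have hsmul : Set.EqOn _ _ (Set.Ioi (0 : ℝ)) := fun u hu =>
    congrArg (fun w : ℂ => (u : ℂ) ^ (z - 1) • w) (hmax hu)
  exact ⟨(integrableOn_congr_fun hsmul measurableSet_Ioi).mp hdiff.1,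
    (setIntegral_congr_fun measurableSet_Ioi hsmul).symm.trans hdiff.2⟩

theorem memLp_two_inv_add_mul_I {a : ℝ} (ha : a ≠ 0) :
    MemLp (fun s : ℝ => ((a : ℂ) + s * I)⁻¹) 2 := by
  have hne (s : ℝ) : (a : ℂ) + s * I ≠ 0 := fun h => ha (by simpa using congrArg re h)
  have hcont : Continuous fun s : ℝ => ((a : ℂ) + s * I)⁻¹ :=
    Continuous.inv₀ (by fun_prop) hne
  rw [memLp_two_iff_integrable_sq_norm hcont.aestronglyMeasurable]
  have hnorm (s : ℝ) : ‖((a : ℂ) + s * I)⁻¹‖ ^ 2 = (a ^ 2)⁻¹ * (1 + (s / a) ^ 2)⁻¹ := by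
    rw [norm_inv, inv_pow, ← normSq_eq_norm_sq, normSq_add_mul_I, ← mul_inv]
    field_simp
  simpa only [hnorm] using (integrable_inv_one_add_sq.comp_div ha).const_mul (a ^ 2)⁻¹

theorem verticalIntegrable_one_div_mul_add_one {σ : ℝ} (hσ : σ ≠ 0) (hσ1 : σ + 1 ≠ 0) :
    VerticalIntegrable (fun z => 1 / (z * (z + 1))) σ := by
  have hprod := (memLp_two_inv_add_mul_I hσ).integrable_mul (memLp_two_inv_add_mul_I hσ1)
  simpa only [VerticalIntegrable, one_div, mul_inv, ofReal_add, ofReal_one, add_right_comm]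
    using! hprod

theorem verticalIntegrable_mellin_max_one_sub {σ : ℝ} (hσ : 0 < σ) :
    VerticalIntegrable (mellin fun u : ℝ => ((max (1 - u) 0 : ℝ) : ℂ)) σ := by
  have hmellin (s : ℝ) := (hasMellin_max_one_sub (z := σ + s * I) (by simpa using hσ)).2
  simpa only [VerticalIntegrable, hmellin] using
    verticalIntegrable_one_div_mul_add_one hσ.ne' (by positivity)

theorem stmt19_general {Ω : Type*} [MeasurableSpace Ω] (μ : Measure Ω) (L : Ω → ℝ) (t : ℝ)
    (ht : 0 < t) (hM : Integrable (fun ω => Real.exp (t * L ω)) μ) (ε : ℝ) :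
    Integrable (fun s : ℝ =>
        Complex.exp (-((t : ℂ) + s * Complex.I) * (ε : ℂ)) *
          (∫ ω, Complex.exp (((t : ℂ) + s * Complex.I) * (L ω : ℂ)) ∂μ) /
          (((t : ℂ) + s * Complex.I) * ((t : ℂ) + s * Complex.I + 1)))
      (volume : Measure ℝ) ∧
    (1 / (2 * (Real.pi : ℂ))) *
        ∫ s : ℝ, Complex.exp (-((t : ℂ) + s * Complex.I) * (ε : ℂ)) *
          (∫ ω, Complex.exp (((t : ℂ) + s * Complex.I) * (L ω : ℂ)) ∂μ) /
          (((t : ℂ) + s * Complex.I) * ((t : ℂ) + s * Complex.I + 1)) =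
      ((∫ ω, max (1 - Real.exp (-(L ω - ε))) 0 ∂μ : ℝ) : ℂ) := by
  have : SigmaFinite μ :=
    sigmaFinite_of_integrable_of_ae_ne_zero hM (.of_forall fun ω => (Real.exp_pos _).ne')
  have hX : AEMeasurable (fun ω => L ω - ε) μ :=
    (aemeasurable_of_aemeasurable_exp_mul ht.ne' hM.aemeasurable).sub_const ε
  have hexp : Integrable (fun ω => Real.exp (t * (L ω - ε))) μ := by
    simpa only [mul_sub, Real.exp_sub] using hM.div_const (Real.exp (t * ε))
  have hmellin (s : ℝ) := (hasMellin_max_one_sub (z := t + s * I) (by simpa using ht)).2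
  have hv := verticalIntegrable_mellin_max_one_sub ht
  have hint := verticalIntegrable_complexMGF_smul hX hexp hv
  have hval := integral_comp_exp_neg_eq_integral_complexMGF_smul_mellin hX hexp (by fun_prop)
    (hasMellin_max_one_sub (z := t) (by simpa using ht)).1 hv
  simp only [VerticalIntegrable, hmellin, complexMGF_sub_const, smul_eq_mul,
    mul_one_div] at hint hval
  refine ⟨hint, ?_⟩
  rw [← integral_complex_ofReal, hval, real_smul]
  push_cast
  rfl

/-- Fourier-analytic representation of the privacy curve: if the MGF of `L` is finite on
an open interval around `t > 0`, then for every `ε ≥ 0`,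
`δ_L(ε) = (1/2π) ∫_{-∞}^{∞} e^{-(t+is)ε} M_L(t+is) / ((t+is)(t+is+1)) ds`,
where the integrand is absolutely integrable and `M_L(z) = E[e^{zL}]`. -/
theorem stmt19 {Ω : Type*} [MeasurableSpace Ω] (μ : Measure Ω) [IsProbabilityMeasure μ]
    (L : Ω → ℝ) (hL : Measurable L) (t : ℝ) (ht : 0 < t)
    (hM : ∃ a c : ℝ, a < t ∧ t < c ∧ ∀ z : ℝ, a < z → z < c →
      Integrable (fun ω => Real.exp (z * L ω)) μ)
    (ε : ℝ) (hε : 0 ≤ ε) :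
    Integrable (fun s : ℝ =>
        Complex.exp (-((t : ℂ) + s * Complex.I) * (ε : ℂ)) *
          (∫ ω, Complex.exp (((t : ℂ) + s * Complex.I) * (L ω : ℂ)) ∂μ) /
          (((t : ℂ) + s * Complex.I) * ((t : ℂ) + s * Complex.I + 1)))
      (volume : Measure ℝ) ∧
    (1 / (2 * (Real.pi : ℂ))) *
        ∫ s : ℝ, Complex.exp (-((t : ℂ) + s * Complex.I) * (ε : ℂ)) *
          (∫ ω, Complex.exp (((t : ℂ) + s * Complex.I) * (L ω : ℂ)) ∂μ) /
          (((t : ℂ) + s * Complex.I) * ((t : ℂ) + s * Complex.I + 1)) =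
      ((∫ ω, max (1 - Real.exp (-(L ω - ε))) 0 ∂μ : ℝ) : ℂ) := by
  obtain ⟨a, c, hat, htc, hI⟩ := hM
  exact stmt19_general μ L t ht (hI t hat htc) ε
end
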